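/- Write C_w for C_w^{(n+1)/2}. For all integers 1 ≤ j, k ≤ N with j ≠ k, the (1,1) entry of the block M̃^{j-1,k-1} = ∫_{-1}^{α} P_{j-1}(x) W_{p,n}(x) P_{k-1}(x)^T dx equals [p(1-α²)^{n/2} / ((k-j)(j+k+n-1)(n+1)²)] · ( j(n-p+j-1)(n-p+k)/(n+2j-1) · C_j(α)C_{k-1}(α) − k(n-p+k-1)(n-p+j)/(n+2k-1) · C_{j-1}(α)C_k(α) + (p+j)(n+j-1)(n-p+j)(n-p+k)/((p+j-1)(n+2j-1)) · C_{j-2}(α)C_{k-1}(α) − (p+k)(n+k-1)(n-p+j)(n-p+k)/((p+k-1)(n+2k-1)) · C_{j-1}(α)C_{k-2}(α) ). -/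

import Mathlib

open Matrix

/-- Pochhammer symbol `(a)_k = a (a+1) ⋯ (a+k-1)`. -/
noncomputable def poch (a : ℝ) (k : ℕ) : ℝ := ∏ i ∈ Finset.range k, (a + i)

/-- Gegenbauer polynomial `C_w^λ(x)`, with the convention `C_w^λ = 0` for `w < 0`. -/
noncomputable def geg (l : ℝ) (w : ℤ) (x : ℝ) : ℝ :=
  if w < 0 then 0 else
    poch (2 * l) w.toNat / (w.toNat.factorial : ℝ) *
      ∑ k ∈ Finset.range (w.toNat + 1),
        (poch (-(w.toNat : ℝ)) k * poch ((w.toNat : ℝ) + 2 * l) k) /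
            (poch (l + 1 / 2) k * (k.factorial : ℝ)) * ((1 - x) / 2) ^ k

/-- The weight matrix `W_{p,n}(x)`. -/
noncomputable def Wmat (n : ℕ) (p : ℝ) (x : ℝ) : Matrix (Fin 2) (Fin 2) ℝ :=
  (1 - x ^ 2) ^ ((n : ℝ) / 2 - 1) •
    !![p * x ^ 2 + (n : ℝ) - p, -(n : ℝ) * x; -(n : ℝ) * x, ((n : ℝ) - p) * x ^ 2 + p]

/-- The matrix valued polynomial `P_w`. -/
noncomputable def Pmat (n : ℕ) (p : ℝ) (w : ℕ) (x : ℝ) : Matrix (Fin 2) (Fin 2) ℝ :=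
  !![1 / ((n : ℝ) + 1) * geg (((n : ℝ) + 1) / 2) (w : ℤ) x +
        1 / (p + w) * geg (((n : ℝ) + 3) / 2) ((w : ℤ) - 2) x,
      1 / (p + w) * geg (((n : ℝ) + 3) / 2) ((w : ℤ) - 1) x;
      1 / ((n : ℝ) - p + w) * geg (((n : ℝ) + 3) / 2) ((w : ℤ) - 1) x,
      1 / ((n : ℝ) + 1) * geg (((n : ℝ) + 1) / 2) (w : ℤ) x +
        1 / ((n : ℝ) - p + w) * geg (((n : ℝ) + 3) / 2) ((w : ℤ) - 2) x]

/-!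
Write `C_w` for `C_w^{(n+1)/2}`. Contiguity relations between the parameters `(n+1)/2` and `(n+3)/2`
turn the first row of `P_w` into `(p C_w + x C_w', C_w') / ((n+1) (p+w))`. The `(1,1)` entry of the
integrand then involves only `C_{j-1}`, `C_{k-1}` and their derivatives, and since these solve
Gegenbauer equations with different eigenvalues, a Lagrange identity makes it an exact derivative.
The primitive carries the factor `(1 - x²)^{n/2}`, so it vanishes at `-1`. Its value at `α` becomes
the stated combination of `C_j`, `C_{j-2}`, `C_k`, `C_{k-2}` by the three-term recurrence and the
formula for `(1 - x²) C_w'`.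
-/

section GegenbauerPolynomial

open Polynomial

lemma poch_succ (a : ℝ) (k : ℕ) : poch a (k + 1) = poch a k * (a + k) :=
  Finset.prod_range_succ _ k

lemma poch_succ_left (a : ℝ) (k : ℕ) : poch a (k + 1) = a * poch (a + 1) k := by
  simp [poch, Finset.prod_range_succ', mul_comm a, add_assoc, add_comm (1 : ℝ)]

lemma poch_add_one_mul (a : ℝ) (k : ℕ) : a * poch (a + 1) k = poch a k * (a + k) := by
  rw [← poch_succ_left, poch_succ]

lemma poch_pos {a : ℝ} (ha : 0 < a) (k : ℕ) : 0 < poch a k :=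
  Finset.prod_pos fun i _ => by positivity

lemma poch_neg_natCast_of_lt {w k : ℕ} (h : w < k) : poch (-(w : ℝ)) k = 0 :=
  Finset.prod_eq_zero (Finset.mem_range.2 h) (neg_add_cancel _)

/-- The coefficient of `((1 - x) / 2) ^ k` in the Gegenbauer polynomial `C_w^l`. -/
noncomputable def gegCoeff (l : ℝ) (w k : ℕ) : ℝ :=
  poch (2 * l) w / (w.factorial : ℝ) *
    ((poch (-(w : ℝ)) k * poch ((w : ℝ) + 2 * l) k) / (poch (l + 1 / 2) k * (k.factorial : ℝ)))

/-- The Gegenbauer polynomial `C_w^l` as a polynomial in the variable `t = (1 - x) / 2`. -/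
noncomputable def gegPoly (l : ℝ) (w : ℕ) : ℝ[X] :=
  ∑ k ∈ Finset.range (w + 1), monomial k (gegCoeff l w k)

lemma coeff_gegPoly (l : ℝ) (w k : ℕ) : (gegPoly l w).coeff k = gegCoeff l w k := by
  have gegCoeff_of_lt (h : w < k) : gegCoeff l w k = 0 := by
    simp [gegCoeff, poch_neg_natCast_of_lt h]
  simpa [gegPoly, finsetSum_coeff, coeff_monomial] using fun h => (gegCoeff_of_lt h).symm

lemma geg_of_neg (l : ℝ) {w : ℤ} (hw : w < 0) (x : ℝ) : geg l w x = 0 := by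
  simp [geg, hw]

lemma geg_natCast (l : ℝ) (w : ℕ) (x : ℝ) :
    geg l w x = (gegPoly l w).eval ((1 - x) / 2) := by
  simp [geg, gegPoly, gegCoeff, eval_finsetSum, Finset.mul_sum, mul_assoc]

lemma coeff_X_mul_derivative {R : Type*} [CommSemiring R] (P : R[X]) (k : ℕ) :
    (X * derivative P).coeff k = k * P.coeff k := by
  cases k with
  | zero => simp
  | succ k => rw [coeff_X_mul, coeff_derivative, mul_comm, Nat.cast_succ]

variable {l : ℝ}

lemma gegCoeff_succ_right (hl : -(1 / 2) < l) (w k : ℕ) :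
    (l + 1 / 2 + k) * (k + 1) * gegCoeff l w (k + 1) =
      (k - w) * (w + 2 * l + k) * gegCoeff l w k := by
  have hl' : 0 < l + 1 / 2 := by linarith
  have := (poch_pos hl' k).ne'
  have : l + 1 / 2 + (k : ℝ) ≠ 0 := by positivity
  simp only [gegCoeff, poch_succ, Nat.factorial_succ, Nat.cast_mul, Nat.cast_succ]
  generalize poch (l + 1 / 2) k = A at *
  generalize l + 1 / 2 + (k : ℝ) = B at *
  field_simp
  ring

lemma gegCoeff_succ_left (l : ℝ) (w k : ℕ) :
    (w + 1 - k) * gegCoeff l (w + 1) k = (w + 2 * l + k) * gegCoeff l w k := by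
  have hneg : (-((w : ℝ) + 1)) * poch (-(w : ℝ)) k =
      poch (-((w : ℝ) + 1)) k * (-((w : ℝ) + 1) + k) := by
    simpa using poch_add_one_mul (-((w : ℝ) + 1)) k
  have hpos := poch_add_one_mul ((w : ℝ) + 2 * l) k
  rw [add_right_comm] at hpos
  simp only [gegCoeff, poch_succ, Nat.factorial_succ, Nat.cast_mul, Nat.cast_succ]
  generalize poch (l + 1 / 2) k = A at *
  field_simp
  linear_combination A⁻¹ * poch (2 * l) w *
    ((w + 2 * l) * poch ((w : ℝ) + 1 + 2 * l) k * hneg + poch (-(w : ℝ)) k * (w + 1) * hpos)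

lemma gegCoeff_succ_succ (hl : -(1 / 2) < l) (w k : ℕ) :
    (k + 1) * (gegCoeff l (w + 1) (k + 1) - gegCoeff l w (k + 1)) =
      -2 * (w + 2 * l + k) * gegCoeff l w k := by
  have hne : l + 1 / 2 + (k : ℝ) ≠ 0 :=
    (add_pos_of_pos_of_nonneg (by linarith) k.cast_nonneg).ne'
  apply mul_left_cancel₀ hne
  have hleft := gegCoeff_succ_left l w k
  have hright := gegCoeff_succ_right hl w k
  have hright' := gegCoeff_succ_right hl (w + 1) k
  push_cast at hright'
  linear_combination hright' - hright - (w + 2 * l + k + 1) * hleft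

lemma gegCoeff_add_one (hl : -(1 / 2) < l) (w k : ℕ) :
    (k + 1) * gegCoeff l (w + 1) (k + 1) = -(4 * l) * gegCoeff (l + 1) w k := by
  have hl2 : 2 * l + 1 ≠ 0 := by linarith
  have hshift := (poch_pos (by linarith : 0 < l + 1 / 2 + 1) k).ne'
  have htop : 2 * l * ((2 * l + 1) * poch (2 * (l + 1)) w) =
      poch (2 * l) (w + 1) * (2 * l + w + 1) := by
    rw [show 2 * (l + 1) = 2 * l + 1 + 1 by ring, ← poch_succ_left, poch_add_one_mul]
    push_cast
    ring
  have hneg : poch (-((w + 1 : ℕ) : ℝ)) (k + 1) = -((w : ℝ) + 1) * poch (-(w : ℝ)) k := by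
    simp [poch_succ_left]
  have hpos : poch ((w + 1 : ℕ) + 2 * l) (k + 1) =
      (2 * l + w + 1) * poch (w + 2 * (l + 1)) k := by
    rw [poch_succ_left]
    push_cast
    ring_nf
  rw [gegCoeff, gegCoeff, hneg, hpos, poch_succ_left (l + 1 / 2) k, Nat.factorial_succ,
    Nat.factorial_succ, add_right_comm l 1, show l + 1 / 2 = (2 * l + 1) / 2 by ring]
  rw [show l + 1 / 2 = (2 * l + 1) / 2 by ring] at hshift
  generalize poch ((2 * l + 1) / 2 + 1) k = A at *
  push_cast
  field_simp
  linear_combination 2 * poch (-(w : ℝ)) k * poch (w + 2 * (l + 1)) k * htop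

lemma derivative_gegPoly_succ (hl : -(1 / 2) < l) (w : ℕ) :
    derivative (gegPoly l (w + 1)) = C (-(4 * l)) * gegPoly (l + 1) w := by
  ext k
  rw [coeff_derivative, coeff_C_mul, coeff_gegPoly, coeff_gegPoly, mul_comm, gegCoeff_add_one hl]

lemma gegPoly_succ_sub (l : ℝ) (w : ℕ) :
    C (w + 1 : ℝ) * gegPoly l (w + 1) - X * derivative (gegPoly l (w + 1)) =
      C (w + 2 * l) * gegPoly l w + X * derivative (gegPoly l w) := by
  ext k
  simp only [coeff_sub, coeff_add, coeff_C_mul, coeff_X_mul_derivative, coeff_gegPoly]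
  linear_combination gegCoeff_succ_left l w k

lemma derivative_gegPoly_succ_sub (hl : -(1 / 2) < l) (w : ℕ) :
    derivative (gegPoly l (w + 1)) - derivative (gegPoly l w) =
      -C 2 * (C (w + 2 * l) * gegPoly l w + X * derivative (gegPoly l w)) := by
  ext k
  simp only [← C_neg, coeff_sub, coeff_add, coeff_C_mul, coeff_X_mul_derivative, coeff_derivative,
    coeff_gegPoly]
  linear_combination gegCoeff_succ_succ hl w k

lemma eval_derivative_gegPoly (hl : -(1 / 2) < l) (w : ℕ) (x : ℝ) :
    (derivative (gegPoly l w)).eval ((1 - x) / 2) = -(4 * l) * geg (l + 1) (w - 1) x := by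
  cases w with
  | zero => simp [gegPoly, geg_of_neg]
  | succ w => simp [derivative_gegPoly_succ hl, geg_natCast]

end GegenbauerPolynomial

section Gegenbauer

variable {l : ℝ}

lemma hasDerivAt_geg (hl : -(1 / 2) < l) (w : ℤ) (x : ℝ) :
    HasDerivAt (geg l w) (2 * l * geg (l + 1) (w - 1) x) x := by
  obtain hw | hw := lt_or_ge w 0
  · have hzero : geg l w = fun _ => 0 := funext (geg_of_neg l hw)
    rw [hzero, geg_of_neg _ (by lia), mul_zero]
    exact hasDerivAt_const x 0
  · lift w to ℕ using hw
    have hvar : HasDerivAt (fun y : ℝ => (1 - y) / 2) (-1 / 2) x :=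
      ((hasDerivAt_id x).const_sub 1).div_const 2
    rw [funext (geg_natCast l w)]
    refine (((gegPoly l w).hasDerivAt _).comp x hvar).congr_deriv ?_
    rw [eval_derivative_gegPoly hl]
    ring

lemma deriv_geg (hl : -(1 / 2) < l) (w : ℤ) :
    deriv (geg l w) = fun x => 2 * l * geg (l + 1) (w - 1) x :=
  funext fun x => (hasDerivAt_geg hl w x).deriv

lemma differentiable_geg (hl : -(1 / 2) < l) (w : ℤ) : Differentiable ℝ (geg l w) :=
  fun x => (hasDerivAt_geg hl w x).differentiableAt

lemma geg_eq_geg_add_one_sub (hl : -(1 / 2) < l) (w : ℤ) (x : ℝ) :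
    (w + 2 * l) * geg l w x = 2 * l * (geg (l + 1) w x - x * geg (l + 1) (w - 1) x) := by
  obtain hw | hw := lt_or_ge w 0
  · simp [geg_of_neg, hw, show w - 1 < 0 by lia]
  · lift w to ℕ using hw
    have h := congrArg (Polynomial.eval ((1 - x) / 2)) (derivative_gegPoly_succ_sub hl w)
    simp only [Polynomial.eval_sub, Polynomial.eval_add, Polynomial.eval_mul, Polynomial.eval_neg,
      Polynomial.eval_C, Polynomial.eval_X, eval_derivative_gegPoly hl, ← geg_natCast,
      Nat.cast_succ, add_sub_cancel_right] at h
    rw [Int.cast_natCast]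
    linear_combination h / 2

lemma geg_eq_mul_geg_add_one_sub (hl : -(1 / 2) < l) (w : ℤ) (x : ℝ) :
    w * geg l w x = 2 * l * (x * geg (l + 1) (w - 1) x - geg (l + 1) (w - 2) x) := by
  obtain hw | hw := lt_or_ge w 0
  · simp [geg_of_neg, hw, show w - 1 < 0 by lia, show w - 2 < 0 by lia]
  · lift w to ℕ using hw
    cases w with
    | zero => simp [geg_of_neg]
    | succ w =>
      have h := congrArg (Polynomial.eval ((1 - x) / 2)) (gegPoly_succ_sub l w)
      simp only [Polynomial.eval_sub, Polynomial.eval_add, Polynomial.eval_mul, Polynomial.eval_C,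
        Polynomial.eval_X, eval_derivative_gegPoly hl, ← geg_natCast, Nat.cast_succ,
        add_sub_cancel_right] at h
      have h' := geg_eq_geg_add_one_sub hl w x
      push_cast at h' ⊢
      rw [add_sub_cancel_right, show (w : ℤ) + 1 - 2 = w - 1 by ring]
      linear_combination h + h'

lemma one_sub_sq_mul_deriv_geg (hl : -(1 / 2) < l) (w : ℤ) (x : ℝ) :
    (1 - x ^ 2) * deriv (geg l w) x = (w + 2 * l - 1) * geg l (w - 1) x - w * x * geg l w x := by
  have h := geg_eq_geg_add_one_sub hl (w - 1) x
  rw [sub_sub, one_add_one_eq_two] at h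
  push_cast at h
  rw [deriv_geg hl]
  linear_combination -h + x * geg_eq_mul_geg_add_one_sub hl w x

lemma geg_three_term_recurrence (hl : -(1 / 2) < l) (w : ℤ) (x : ℝ) :
    2 * (w + l) * (x * geg l w x) =
      (w + 1) * geg l (w + 1) x + (w + 2 * l - 1) * geg l (w - 1) x := by
  have h := geg_eq_mul_geg_add_one_sub hl (w + 1) x
  rw [add_sub_cancel_right, show w + 1 - 2 = w - 1 by ring] at h
  push_cast at h
  have h' := one_sub_sq_mul_deriv_geg hl w x
  rw [deriv_geg hl] at h'
  linear_combination x * geg_eq_geg_add_one_sub hl w x - h + h'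

end Gegenbauer

section Weight

open MeasureTheory

lemma intervalIntegrable_one_sub_sq_rpow {s : ℝ} (hs : -1 < s) :
    IntervalIntegrable (fun x : ℝ => (1 - x ^ 2) ^ s) volume (-1) 1 := by
  have hleft : IntervalIntegrable (fun x : ℝ => (1 - x ^ 2) ^ s) volume (-1) 0 := by
    have hsing : IntervalIntegrable (fun x : ℝ => (x + 1) ^ s) volume (-1) 0 := by
      simpa using (intervalIntegral.intervalIntegrable_rpow' (a := 0) (b := 1) hs).comp_add_right 1
    have hreg : ContinuousOn (fun x : ℝ => (1 - x) ^ s) (Set.uIcc (-1) 0) := by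
      rw [Set.uIcc_of_le (by norm_num)]
      exact ContinuousOn.rpow_const (by fun_prop) fun x hx => Or.inl (by linarith [hx.2])
    refine (hsing.mul_continuousOn hreg).congr fun x hx => ?_
    rw [Set.uIoc_of_le (by norm_num)] at hx
    change (x + 1) ^ s * (1 - x) ^ s = (1 - x ^ 2) ^ s
    rw [← Real.mul_rpow (by linarith [hx.1]) (by linarith [hx.2])]
    ring_nf
  have hright : IntervalIntegrable (fun x : ℝ => (1 - x ^ 2) ^ s) volume 0 1 := by
    simpa using (IntervalIntegrable.iff_comp_neg (by simp)).mp hleft.symm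
  exact hleft.trans hright

lemma integral_one_sub_sq_rpow_mul {s : ℝ} (hs : -1 < s) {f f' : ℝ → ℝ}
    (hf : ∀ x, HasDerivAt f (f' x) x) (hf' : Continuous f') {α : ℝ} (hα : α ∈ Set.Icc (-1) 1) :
    ∫ x in (-1)..α, (1 - x ^ 2) ^ s * ((1 - x ^ 2) * f' x - 2 * (s + 1) * x * f x) =
      (1 - α ^ 2) ^ (s + 1) * f α := by
  have hfc : Continuous f := continuous_iff_continuousAt.2 fun x => (hf x).continuousAt
  have hvanish : (1 - (-1 : ℝ) ^ 2) ^ (s + 1) = 0 := by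
    rw [neg_one_sq, sub_self, Real.zero_rpow (by linarith)]
  rw [intervalIntegral.integral_eq_sub_of_hasDerivAt_of_le
    (f := fun x => (1 - x ^ 2) ^ (s + 1) * f x) hα.1, hvanish, zero_mul, sub_zero]
  · have hweight : Continuous fun x : ℝ => (1 - x ^ 2) ^ (s + 1) :=
      Continuous.rpow_const (by fun_prop) fun _ => Or.inr (by linarith)
    exact (hweight.mul hfc).continuousOn
  · intro x hx
    have hpos : 0 < 1 - x ^ 2 := by nlinarith [hx.1, hx.2, hα.2]
    have hbase : HasDerivAt (fun y : ℝ => 1 - y ^ 2) (-(2 * x)) x := by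
      simpa using (hasDerivAt_pow 2 x).const_sub 1
    refine ((hbase.rpow_const (Or.inl hpos.ne')).mul (hf x)).congr_deriv ?_
    rw [add_sub_cancel_right, Real.rpow_add_one hpos.ne']
    ring
  · have hsub : Set.uIcc (-1) α ⊆ Set.uIcc (-1) 1 := by
      rw [Set.uIcc_of_le hα.1, Set.uIcc_of_le (by norm_num)]
      exact Set.Icc_subset_Icc_right hα.2
    exact ((intervalIntegrable_one_sub_sq_rpow hs).mono_set hsub).mul_continuousOn
      (by fun_prop)

end Weight

/-- `A` is a twice differentiable solution on `ℝ` of the Gegenbauer equation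
`(1 - x²) A'' - (2l + 1) x A' + μ A = 0`. -/
structure IsGegenbauerSolution (l μ : ℝ) (A : ℝ → ℝ) : Prop where
  differentiable : Differentiable ℝ A
  differentiable_deriv : Differentiable ℝ (deriv A)
  ode : ∀ x, (1 - x ^ 2) * deriv (deriv A) x = (2 * l + 1) * x * deriv A x - μ * A x

namespace IsGegenbauerSolution

variable {l μ ν : ℝ} {A B : ℝ → ℝ}

lemma hasDerivAt_one_sub_sq_mul_deriv_mul (hA : IsGegenbauerSolution l μ A)
    (hB : Differentiable ℝ B) (x : ℝ) :
    HasDerivAt (fun y => (1 - y ^ 2) * deriv A y * B y)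
      (((2 * l - 1) * x * deriv A x - μ * A x) * B x + (1 - x ^ 2) * deriv A x * deriv B x) x := by
  have hbase : HasDerivAt (fun y : ℝ => 1 - y ^ 2) (-(2 * x)) x := by
    simpa using (hasDerivAt_pow 2 x).const_sub 1
  refine ((hbase.mul (hA.differentiable_deriv x).hasDerivAt).mul (hB x).hasDerivAt).congr_deriv ?_
  simp only [Pi.mul_apply]
  linear_combination B x * hA.ode x

-- `ν - μ` times the left integrand is the derivative in `α` of the right-hand side: differentiating
-- `(1 - x²) A' B` and `(1 - x²) A B'` gives the terms in `A' B'` as in Lagrange's identity, and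
-- `x A B` corrects the mixed terms.
lemma integral_deriv_mul_deriv (hA : IsGegenbauerSolution l μ A)
    (hB : IsGegenbauerSolution l ν B) (hl : 1 / 2 < l) (p : ℝ) {α : ℝ}
    (hα : α ∈ Set.Icc (-1) 1) :
    (ν - μ) * ∫ x in (-1)..α, (1 - x ^ 2) ^ (l - 3 / 2) *
        ((1 - x ^ 2) ^ 2 * (deriv A x * deriv B x) -
          p * x * (1 - x ^ 2) * (deriv A x * B x + A x * deriv B x) +
          p * (p * x ^ 2 + (2 * l - 1) - p) * (A x * B x)) =
      (1 - α ^ 2) ^ (l - 1 / 2) *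
        ((1 - α ^ 2) * ((ν + p * (2 * l - p)) * (deriv A α * B α) -
            (μ + p * (2 * l - p)) * (A α * deriv B α)) -
          p * (ν - μ) * α * (A α * B α)) := by
  have hcont := hA.differentiable.continuous
  have hcont' := hA.differentiable_deriv.continuous
  have hcontB := hB.differentiable.continuous
  have hcontB' := hB.differentiable_deriv.continuous
  have hprod (x : ℝ) := ((hasDerivAt_id x).mul (hA.differentiable x).hasDerivAt).mul
    (hB.differentiable x).hasDerivAt
  have hA' := hA.hasDerivAt_one_sub_sq_mul_deriv_mul hB.differentiable
  have hB' := hB.hasDerivAt_one_sub_sq_mul_deriv_mul hA.differentiable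
  have hf (x : ℝ) := (((hA' x).const_mul (ν + p * (2 * l - p))).sub
    ((hB' x).const_mul (μ + p * (2 * l - p)))).sub ((hprod x).const_mul (p * (ν - μ)))
  have key := integral_one_sub_sq_rpow_mul (s := l - 3 / 2) (by linarith) hf
    (by simp only [id]; fun_prop) hα
  rw [← intervalIntegral.integral_const_mul]
  convert key using 1
  · refine intervalIntegral.integral_congr fun x _ => ?_
    simp only [Pi.mul_apply, Pi.sub_apply, id]
    ring
  · rw [show l - 3 / 2 + 1 = l - 1 / 2 by ring]
    simp only [Pi.mul_apply, Pi.sub_apply, id]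
    ring

end IsGegenbauerSolution

lemma isGegenbauerSolution_geg {l : ℝ} (hl : -(1 / 2) < l) (w : ℤ) :
    IsGegenbauerSolution l (w * (w + 2 * l)) (geg l w) where
  differentiable := differentiable_geg hl w
  differentiable_deriv := by
    rw [deriv_geg hl]
    exact (differentiable_geg (by linarith) _).const_mul _
  ode x := by
    have h := one_sub_sq_mul_deriv_geg (l := l + 1) (by linarith) (w - 1) x
    have hder : deriv (deriv (geg l w)) x = 2 * l * deriv (geg (l + 1) (w - 1)) x := by
      rw [deriv_geg hl]
      exact deriv_const_mul _ (differentiable_geg (by linarith) _ _)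
    rw [hder, deriv_geg hl]
    rw [sub_sub, one_add_one_eq_two] at h
    push_cast at h
    linear_combination 2 * l * h + (w + 2 * l) * geg_eq_mul_geg_add_one_sub hl w x

lemma mul_Wmat_mul_transpose_zero_zero (n : ℕ) (p x : ℝ) (P Q : Matrix (Fin 2) (Fin 2) ℝ) :
    (P * Wmat n p x * Qᵀ) 0 0 = (1 - x ^ 2) ^ ((n : ℝ) / 2 - 1) *
      (P 0 0 * Q 0 0 * (p * x ^ 2 + n - p) - n * x * (P 0 0 * Q 0 1 + P 0 1 * Q 0 0) +
        P 0 1 * Q 0 1 * ((n - p) * x ^ 2 + p)) := by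
  simp only [Wmat, Matrix.mul_apply, Fin.sum_univ_two, Matrix.transpose_apply, Matrix.smul_apply,
    smul_eq_mul, Matrix.of_apply, Matrix.cons_val', Matrix.cons_val_zero, Matrix.cons_val_one]
  ring

lemma neg_one_half_lt_natCast_add_one_div_two (n : ℕ) : -(1 / 2 : ℝ) < ((n : ℝ) + 1) / 2 := by
  have : (0 : ℝ) ≤ n := n.cast_nonneg
  linarith

lemma Pmat_zero_one (n : ℕ) (p : ℝ) (w : ℕ) (x : ℝ) :
    Pmat n p w x 0 1 = deriv (geg (((n : ℝ) + 1) / 2) w) x / ((n + 1) * (p + w)) := by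
  rw [deriv_geg (neg_one_half_lt_natCast_add_one_div_two n),
    show ((n : ℝ) + 1) / 2 + 1 = (n + 3) / 2 by ring]
  simp only [Pmat, Matrix.of_apply, Matrix.cons_val', Matrix.cons_val_zero, Matrix.cons_val_one]
  field_simp

lemma Pmat_zero_zero (n : ℕ) {p : ℝ} {w : ℕ} (hw : p + w ≠ 0) (x : ℝ) :
    Pmat n p w x 0 0 = (p * geg (((n : ℝ) + 1) / 2) w x +
      x * deriv (geg (((n : ℝ) + 1) / 2) w) x) / ((n + 1) * (p + w)) := by
  have hl := neg_one_half_lt_natCast_add_one_div_two n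
  have h := geg_eq_mul_geg_add_one_sub hl w x
  rw [deriv_geg hl]
  rw [show ((n : ℝ) + 1) / 2 + 1 = (n + 3) / 2 by ring] at h ⊢
  simp only [Pmat, Matrix.of_apply, Matrix.cons_val', Matrix.cons_val_zero]
  push_cast at h
  field_simp
  linear_combination h

lemma Pmat_mul_Wmat_mul_Pmat_transpose_zero_zero (n : ℕ) {p : ℝ} {a b : ℕ} (ha : p + a ≠ 0)
    (hb : p + b ≠ 0) (x : ℝ) :
    (Pmat n p a x * Wmat n p x * (Pmat n p b x)ᵀ) 0 0 =
      p / ((n + 1) ^ 2 * (p + a) * (p + b)) * ((1 - x ^ 2) ^ ((n : ℝ) / 2 - 1) *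
        ((1 - x ^ 2) ^ 2 *
            (deriv (geg ((n + 1) / 2) a) x * deriv (geg ((n + 1) / 2) b) x) -
          p * x * (1 - x ^ 2) * (deriv (geg ((n + 1) / 2) a) x * geg ((n + 1) / 2) b x +
            geg ((n + 1) / 2) a x * deriv (geg ((n + 1) / 2) b) x) +
          p * (p * x ^ 2 + n - p) * (geg ((n + 1) / 2) a x * geg ((n + 1) / 2) b x))) := by
  rw [mul_Wmat_mul_transpose_zero_zero, Pmat_zero_zero n ha, Pmat_zero_zero n hb, Pmat_zero_one,
    Pmat_zero_one]
  field_simp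
  ring

/-- The factor attached to degree `w` in the boundary term of the `(1,1)` entry: the paper's
combination of `C_{w+1}` and `C_{w-1}`, written through `C_w` and `C_w'`. -/
noncomputable def gegBoundary (n : ℕ) (p : ℝ) (w : ℕ) (x : ℝ) : ℝ :=
  ((1 - x ^ 2) * deriv (geg (((n : ℝ) + 1) / 2) w) x +
    ((p + w) * (n - p + w) + w) * (x * geg (((n : ℝ) + 1) / 2) w x)) / (p + w)

lemma gegBoundary_eq (n : ℕ) {p : ℝ} {w : ℕ} (hw : p + w ≠ 0) (x : ℝ) :
    gegBoundary n p w x =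
      (w + 1) * (n - p + w) / (n + 2 * w + 1) * geg (((n : ℝ) + 1) / 2) (w + 1) x +
        (p + w + 1) * (n + w) * (n - p + w + 1) / ((p + w) * (n + 2 * w + 1)) *
          geg (((n : ℝ) + 1) / 2) (w - 1) x := by
  have hl := neg_one_half_lt_natCast_add_one_div_two n
  have hrec := geg_three_term_recurrence hl w x
  have : (n : ℝ) + 2 * w + 1 ≠ 0 := by positivity
  rw [gegBoundary, one_sub_sq_mul_deriv_geg hl]
  push_cast at hrec ⊢
  field_simp
  linear_combination (p + w) * (n - p + w) * hrec

lemma integral_Pmat_mul_Wmat_mul_Pmat_transpose_zero_zero {n : ℕ} (hn : 1 ≤ n) {p : ℝ}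
    {a b : ℕ} (ha : p + a ≠ 0) (hb : p + b ≠ 0) {α : ℝ} (hα : α ∈ Set.Icc (-1) 1) :
    (b - a) * (a + b + n + 1) *
        ∫ x in (-1)..α, (Pmat n p a x * Wmat n p x * (Pmat n p b x)ᵀ) 0 0 =
      p * (1 - α ^ 2) ^ ((n : ℝ) / 2) / (n + 1) ^ 2 *
        ((n - p + b + 1) * gegBoundary n p a α * geg (((n : ℝ) + 1) / 2) b α -
          (n - p + a + 1) * geg (((n : ℝ) + 1) / 2) a α * gegBoundary n p b α) := by
  have hl := neg_one_half_lt_natCast_add_one_div_two n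
  have hn' : (1 : ℝ) ≤ n := by exact_mod_cast hn
  have key := (isGegenbauerSolution_geg hl a).integral_deriv_mul_deriv
    (isGegenbauerSolution_geg hl b) (by linarith) p hα
  rw [show ((n : ℝ) + 1) / 2 - 3 / 2 = n / 2 - 1 by ring,
    show ((n : ℝ) + 1) / 2 - 1 / 2 = n / 2 by ring, mul_div_cancel₀ _ two_ne_zero] at key
  simp only [Int.cast_natCast, add_sub_cancel_right] at key
  simp only [Pmat_mul_Wmat_mul_Pmat_transpose_zero_zero n ha hb,
    intervalIntegral.integral_const_mul]
  rw [mul_left_comm, show ((b : ℝ) - a) * (a + b + n + 1) =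
    b * (b + (n + 1)) - a * (a + (n + 1)) by ring, key, gegBoundary, gegBoundary]
  field_simp
  ring


theorem stmt_19_general (n : ℕ) (hn : 1 ≤ n) (p : ℝ) (α : ℝ) (hα : α ∈ Set.Icc (-1 : ℝ) 1)
    (j k : ℕ) (hj : 1 ≤ j) (hk : 1 ≤ k) (hjk : j ≠ k) (hpj : p + j - 1 ≠ 0) (hpk : p + k - 1 ≠ 0) :
    (∫ x in (-1 : ℝ)..α, (Pmat n p (j - 1) x * Wmat n p x * (Pmat n p (k - 1) x)ᵀ) 0 0) =
      p * (1 - α ^ 2) ^ ((n : ℝ) / 2) /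
          (((k : ℝ) - j) * ((j : ℝ) + k + n - 1) * ((n : ℝ) + 1) ^ 2) *
        ((j : ℝ) * ((n : ℝ) - p + j - 1) * ((n : ℝ) - p + k) / ((n : ℝ) + 2 * j - 1) *
            geg (((n : ℝ) + 1) / 2) (j : ℤ) α * geg (((n : ℝ) + 1) / 2) ((k : ℤ) - 1) α -
          (k : ℝ) * ((n : ℝ) - p + k - 1) * ((n : ℝ) - p + j) / ((n : ℝ) + 2 * k - 1) *
            geg (((n : ℝ) + 1) / 2) ((j : ℤ) - 1) α * geg (((n : ℝ) + 1) / 2) (k : ℤ) α +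
          (p + j) * ((n : ℝ) + j - 1) * ((n : ℝ) - p + j) * ((n : ℝ) - p + k) /
              ((p + j - 1) * ((n : ℝ) + 2 * j - 1)) *
            geg (((n : ℝ) + 1) / 2) ((j : ℤ) - 2) α *
            geg (((n : ℝ) + 1) / 2) ((k : ℤ) - 1) α -
          (p + k) * ((n : ℝ) + k - 1) * ((n : ℝ) - p + j) * ((n : ℝ) - p + k) /
              ((p + k - 1) * ((n : ℝ) + 2 * k - 1)) *
            geg (((n : ℝ) + 1) / 2) ((j : ℤ) - 1) α *
            geg (((n : ℝ) + 1) / 2) ((k : ℤ) - 2) α) := by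
  obtain ⟨a, rfl⟩ := Nat.exists_eq_add_of_le' hj
  obtain ⟨b, rfl⟩ := Nat.exists_eq_add_of_le' hk
  push_cast at hpj hpk ⊢
  rw [← add_assoc, add_sub_cancel_right] at hpj hpk
  have hab : (b : ℝ) - a ≠ 0 := sub_ne_zero.2 fun h => hjk (by rw [Nat.cast_injective h])
  have hsum : (a : ℝ) + b + n + 1 ≠ 0 := by positivity
  have key := integral_Pmat_mul_Wmat_mul_Pmat_transpose_zero_zero hn hpj hpk hα
  rw [gegBoundary_eq n hpj, gegBoundary_eq n hpk] at key
  simp only [add_sub_cancel_right, show ∀ w : ℤ, w + 1 - 2 = w - 1 from fun w => by ring]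
  rw [← mul_right_inj' (mul_ne_zero hab hsum), key,
    show (b : ℝ) + 1 - (a + 1) = b - a by ring,
    show (a : ℝ) + 1 + (b + 1) + n - 1 = a + b + n + 1 by ring,
    show (n : ℝ) + 2 * (a + 1) - 1 = n + 2 * a + 1 by ring,
    show (n : ℝ) + 2 * (b + 1) - 1 = n + 2 * b + 1 by ring,
    ← add_assoc p, ← add_assoc p, add_sub_cancel_right, add_sub_cancel_right]
  field_simp
  ring

/-- The `(1,1)` entry of the block `M̃^{j-1,k-1} = ∫_{-1}^α P_{j-1} W_{p,n} P_{k-1}^T dx`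
for `1 ≤ j ≠ k ≤ N`, where `C_w` denotes `C_w^{(n+1)/2}` (with `C_w = 0` for `w < 0`). -/
theorem stmt_19 (n : ℕ) (hn : 1 ≤ n) (p : ℝ) (hp : 0 < p) (hpn : p < n)
    (N : ℕ) (α : ℝ) (hα : α ∈ Set.Ioo (-1 : ℝ) 1) :
    ∀ j k : ℕ, 1 ≤ j → j ≤ N → 1 ≤ k → k ≤ N → j ≠ k →
      (∫ x in (-1 : ℝ)..α, (Pmat n p (j - 1) x * Wmat n p x * (Pmat n p (k - 1) x)ᵀ) 0 0) =
        p * (1 - α ^ 2) ^ ((n : ℝ) / 2) /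
            (((k : ℝ) - j) * ((j : ℝ) + k + n - 1) * ((n : ℝ) + 1) ^ 2) *
          ((j : ℝ) * ((n : ℝ) - p + j - 1) * ((n : ℝ) - p + k) / ((n : ℝ) + 2 * j - 1) *
              geg (((n : ℝ) + 1) / 2) (j : ℤ) α * geg (((n : ℝ) + 1) / 2) ((k : ℤ) - 1) α -
            (k : ℝ) * ((n : ℝ) - p + k - 1) * ((n : ℝ) - p + j) / ((n : ℝ) + 2 * k - 1) *
              geg (((n : ℝ) + 1) / 2) ((j : ℤ) - 1) α * geg (((n : ℝ) + 1) / 2) (k : ℤ) α +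
            (p + j) * ((n : ℝ) + j - 1) * ((n : ℝ) - p + j) * ((n : ℝ) - p + k) /
                ((p + j - 1) * ((n : ℝ) + 2 * j - 1)) *
              geg (((n : ℝ) + 1) / 2) ((j : ℤ) - 2) α *
              geg (((n : ℝ) + 1) / 2) ((k : ℤ) - 1) α -
            (p + k) * ((n : ℝ) + k - 1) * ((n : ℝ) - p + j) * ((n : ℝ) - p + k) /
                ((p + k - 1) * ((n : ℝ) + 2 * k - 1)) *
              geg (((n : ℝ) + 1) / 2) ((j : ℤ) - 1) α *
              geg (((n : ℝ) + 1) / 2) ((k : ℤ) - 2) α) := by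
  intro j k hj _ hk _ hjk
  have hj' : (1 : ℝ) ≤ j := by exact_mod_cast hj
  have hk' : (1 : ℝ) ≤ k := by exact_mod_cast hk
  exact stmt_19_general n hn p α (Set.Ioo_subset_Icc_self hα) j k hj hk hjk (by linarith)
    (by linarith)
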